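/- Let n ≥ 1. There exists a constant C > 0 such that for every F ∈ L²(ℝ^{n+1}_+), the maximal regularity operator (M⁺F)(t,·) := ∫₀^t ((Δh_{t−s}) ⋆ F(s,·)) ds satisfies ‖M⁺F‖_{L²(ℝ^{n+1}_+)} ≤ C ‖F‖_{L²(ℝ^{n+1}_+)} (de Simon's maximal regularity estimate for the heat semigroup). -/

import Mathlib

open MeasureTheory Real ENNReal
open scoped ENNReal NNReal FourierTransform RealInnerProductSpace

noncomputable section

/-- `ℝⁿ` with the Euclidean norm. -/
abbrev Rn (n : ℕ) := EuclideanSpace ℝ (Fin n)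
/-- `ℂⁿ` with the Euclidean norm. -/
abbrev Cn (n : ℕ) := EuclideanSpace ℂ (Fin n)
/-- `ℂⁿ ⊗ ℂⁿ` (i.e. `n × n` complex matrices) with the Frobenius norm. -/
abbrev Mn (n : ℕ) := EuclideanSpace ℂ (Fin n × Fin n)

instance (n : ℕ) : MeasurableSpace (Cn n) := borel _
instance (n : ℕ) : BorelSpace (Cn n) := ⟨rfl⟩
instance (n : ℕ) : MeasurableSpace (Mn n) := borel _
instance (n : ℕ) : BorelSpace (Mn n) := ⟨rfl⟩

/-- The `L²(ℝ^{n+1}_+)`-norm of a function on the upper half space,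
as an `ℝ≥0∞`-valued quantity. -/
def l2HalfNorm {n : ℕ} {V : Type*} [NormedAddCommGroup V] (F : ℝ → Rn n → V) : ℝ≥0∞ :=
  (∫⁻ t in Set.Ioi (0 : ℝ), ∫⁻ x : Rn n, (‖F t x‖₊ : ℝ≥0∞) ^ 2) ^ (1 / 2 : ℝ)

/-- The Gaussian heat kernel `h_t(x) = (4πt)^{-n/2} exp(-|x|²/(4t))`. -/
def heatKernel (n : ℕ) (t : ℝ) (x : Rn n) : ℝ :=
  (4 * π * t) ^ (-(n : ℝ) / 2) * Real.exp (-‖x‖ ^ 2 / (4 * t))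

/-- The Laplacian `Δh_t` of the Gaussian heat kernel (explicit formula), so that
convolution with `Δh_τ` realizes `Δe^{τΔ}`. -/
def heatKernelLap (n : ℕ) (t : ℝ) (x : Rn n) : ℝ :=
  (‖x‖ ^ 2 / (4 * t ^ 2) - n / (2 * t)) * heatKernel n t x

/-- The maximal regularity operator `(M⁺F)(t,·) = ∫₀^t (Δh_{t-s}) ⋆ F(s,·) ds`. -/
def maxReg (n : ℕ) {V : Type*} [NormedAddCommGroup V] [NormedSpace ℝ V]
    (F : ℝ → Rn n → V) (t : ℝ) (x : Rn n) : V :=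
  ∫ s in Set.Ioo (0 : ℝ) t, ∫ y : Rn n, heatKernelLap n (t - s) (x - y) • F s y


section PartA
open MeasureTheory Convolution FourierTransform ContinuousLinearMap SchwartzMap

variable {E : Type*} [NormedAddCommGroup E] [InnerProductSpace ℝ E] [FiniteDimensional ℝ E]
  [MeasurableSpace E] [BorelSpace E]

theorem planch_aux {u : E → ℂ} (hu : Integrable u) (hc : Continuous u) (hv : Integrable (𝓕 u)) :
    ∫ x, ‖u x‖ ^ 2 = ∫ x, ‖𝓕 u x‖ ^ 2 := by
  have h := VectorFourier.integral_sesq_fourierIntegral_eq_neg_flip (innerSL ℂ (E := ℂ))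
    (L := innerₗ E) continuous_fourierChar continuous_inner hu hv
  have h2 : ∀ x, VectorFourier.fourierIntegral 𝐞 volume (-(innerₗ E).flip) (𝓕 u) x = u x := by
    intro x
    have := congrFun (Continuous.fourierInv_fourier_eq hc hu hv) x
    rw [← this]
    simp [Real.fourierInv_eq, VectorFourier.fourierIntegral]
  have h3 : VectorFourier.fourierIntegral 𝐞 volume (innerₗ E) u = 𝓕 u := rfl
  simp_rw [h2, h3] at h
  apply Complex.ofRealLI.injective
  simpa [← LinearIsometry.integral_comp_comm, inner_self_eq_norm_sq_to_K] using h.symm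

theorem conv_schwartz {K : E → ℂ} (hK : Integrable K) (hb : ∀ ξ, ‖𝓕 K ξ‖ ≤ 1) (φ : 𝓢(E, ℂ)) :
    ∫⁻ x, ‖(K ⋆[mul ℂ ℂ] φ) x‖ₑ ^ 2 ≤ ∫⁻ x, ‖φ x‖ₑ ^ 2 := by
  set u := K ⋆[mul ℂ ℂ] φ with hudef
  have hbd : BddAbove (Set.range fun x => ‖φ x‖) :=
    ⟨SchwartzMap.seminorm ℝ 0 0 φ, fun x ⟨y, hy⟩ ↦ hy ▸ norm_le_seminorm ℝ φ y⟩
  have huc : Continuous u :=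
    BddAbove.continuous_convolution_right_of_integrable _ hbd hK φ.continuous
  have hui : Integrable u := hK.integrable_convolution _ φ.integrable
  have hF : ∀ ξ, 𝓕 u ξ = 𝓕 K ξ * 𝓕 φ ξ := fun ξ => by
    rw [SchwartzMap.fourier_coe]
    exact Real.fourier_mul_convolution_eq hK φ.integrable ξ
  have hle : ∀ ξ, ‖𝓕 u ξ‖ ≤ ‖𝓕 φ ξ‖ := fun ξ => by
    rw [hF, norm_mul]; exact mul_le_of_le_one_left (norm_nonneg _) (hb ξ)
  have hFc : Continuous (𝓕 u) := VectorFourier.fourierIntegral_continuous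
    Real.continuous_fourierChar (innerSL ℝ).continuous₂ hui
  have hv : Integrable (𝓕 u) := (𝓕 φ).integrable.mono hFc.aestronglyMeasurable
    (Filter.Eventually.of_forall hle)
  have hP := planch_aux hui huc hv
  have hm : MemLp (fun x => 𝓕 φ x) 2 := (𝓕 φ).memLp 2
  have hm1 : MemLp (fun x => φ x) 2 := φ.memLp 2
  have hle2 : ∫ x, ‖u x‖ ^ 2 ≤ ∫ x, ‖φ x‖ ^ 2 := by
    rw [hP, ← SchwartzMap.integral_norm_sq_fourier]
    apply integral_mono_of_nonneg (Filter.Eventually.of_forall fun x => by positivity)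
      (hm.integrable_norm_pow (by norm_num))
    exact Filter.Eventually.of_forall fun x => by
      have := hle x
      dsimp only
      gcongr
  -- u is square integrable
  obtain ⟨B, hB⟩ : ∃ B, ∀ x, ‖u x‖ ≤ B := by
    obtain ⟨M, hM⟩ := hbd
    refine ⟨∫ y, ‖K y‖ * M, fun x => ?_⟩
    refine norm_integral_le_of_norm_le (hK.norm.mul_const M) ?_
    exact Filter.Eventually.of_forall fun t => by
      simp only [mul_apply', norm_mul]
      gcongr
      exact hM ⟨x - t, rfl⟩
  have hu2 : Integrable (fun x => ‖u x‖ ^ 2) := by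
    refine (hui.norm.mul_const B).mono (by fun_prop) (Filter.Eventually.of_forall fun x => ?_)
    have h0 := norm_nonneg (u x)
    have hB' := hB x
    rw [Real.norm_of_nonneg (by positivity), Real.norm_of_nonneg (mul_nonneg h0 (h0.trans hB')), sq]
    gcongr
  have e1 : ∀ (w : E → ℂ), (∫⁻ x, ‖w x‖ₑ ^ 2) = ∫⁻ x, ENNReal.ofReal (‖w x‖ ^ 2) := fun w => by
    congr with x
    rw [ENNReal.ofReal_pow (norm_nonneg _), ofReal_norm]
  rw [e1, e1, ← ofReal_integral_eq_lintegral_ofReal hu2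
    (Filter.Eventually.of_forall fun x => by positivity),
    ← ofReal_integral_eq_lintegral_ofReal (hm1.integrable_norm_pow (by norm_num))
    (Filter.Eventually.of_forall fun x => by positivity)]
  exact ENNReal.ofReal_le_ofReal hle2

theorem eLpNorm_two_sq {X : Type*} [MeasureSpace X] (w : X → ℂ) :
    ∫⁻ x, ‖w x‖ₑ ^ 2 = (eLpNorm w 2 volume) ^ 2 := by
  rw [eLpNorm_eq_lintegral_rpow_enorm_toReal (by norm_num) (by norm_num), ← ENNReal.rpow_natCast,
    ← ENNReal.rpow_mul]
  simp

theorem conv_L2 {K : E → ℂ} (hK : Integrable K) (hK2 : MemLp K 2) (hb : ∀ ξ, ‖𝓕 K ξ‖ ≤ 1)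
    {f : E → ℂ} (hf : MemLp f 2) :
    ∫⁻ x, ‖∫ y, K (x - y) * f y‖ₑ ^ 2 ≤ ∫⁻ x, ‖f x‖ₑ ^ 2 := by
  obtain ⟨φ, hφ⟩ : ∃ φ : ℕ → 𝓢(E, ℂ),
      Filter.Tendsto (fun k => eLpNorm (f - ⇑(φ k)) 2 volume) Filter.atTop (nhds 0) := by
    have hd := SchwartzMap.denseRange_toLpCLM (F := ℂ) (E := E) (p := 2) (μ := volume)
      ENNReal.ofNat_ne_top
    have : ∀ k : ℕ, ∃ φ : 𝓢(E, ℂ), eLpNorm (f - ⇑φ) 2 volume < ((k : ℝ≥0∞) + 1)⁻¹ := by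
      intro k
      have hpos : (0 : ℝ) < ((k : ℝ) + 1)⁻¹ := by positivity
      obtain ⟨y, ⟨φ, rfl⟩, hy⟩ := Metric.mem_closure_iff.1 (hd (hf.toLp f)) _ hpos
      refine ⟨φ, ?_⟩
      have h1 : edist (hf.toLp f) (φ.toLp 2) < ENNReal.ofReal (((k : ℝ) + 1)⁻¹) := by
        rw [edist_dist]
        exact (ENNReal.ofReal_lt_ofReal_iff hpos).2 hy
      rw [Lp.edist_def] at h1
      have h2 : eLpNorm (f - ⇑φ) 2 volume = eLpNorm (⇑(hf.toLp f) - ⇑(φ.toLp 2)) 2 volume := by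
        apply eLpNorm_congr_ae
        exact (hf.coeFn_toLp.sub (φ.coeFn_toLp 2)).symm
      rw [h2]
      refine h1.trans_le ?_
      rw [ENNReal.ofReal_inv_of_pos (by positivity), ENNReal.ofReal_add (by positivity) (by positivity)]
      simp
    choose φ hφ using this
    refine ⟨φ, tendsto_of_tendsto_of_tendsto_of_le_of_le tendsto_const_nhds ?_
      (fun _ => zero_le) (fun k => (hφ k).le)⟩
    have := (ENNReal.tendsto_inv_nat_nhds_zero).comp (Filter.tendsto_add_atTop_nat 1)
    refine this.congr fun k => by simp
  have hKx : ∀ x, MemLp (fun y => K (x - y)) 2 := fun x =>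
    hK2.comp_measurePreserving (Measure.measurePreserving_sub_left volume x)
  have hrepr : ∀ k x, (K ⋆[mul ℂ ℂ] φ k) x = ∫ y, K (x - y) * φ k y := fun k x => by
    rw [← MeasureTheory.convolution_flip]
    simp [convolution_def, mul_comm]
  have hpt : ∀ x, Filter.Tendsto (fun k => (K ⋆[mul ℂ ℂ] φ k) x) Filter.atTop
      (nhds (∫ y, K (x - y) * f y)) := by
    intro x
    simp_rw [hrepr]
    have hint : ∀ g : E → ℂ, MemLp g 2 → Integrable (fun y => K (x - y) * g y) := fun g hg =>
      (hKx x).integrable_mul hg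
    refine tendsto_integral_of_L1 (F := fun k y => K (x - y) * φ k y) _ ((hint f hf).aestronglyMeasurable)
      (Filter.Eventually.of_forall fun k => hint _ ((φ k).memLp 2)) ?_
    have hbound : ∀ k, (∫⁻ y, ‖K (x - y) * φ k y - K (x - y) * f y‖ₑ) ≤
        eLpNorm (fun y => K (x - y)) 2 volume * eLpNorm (f - ⇑(φ k)) 2 volume := by
      intro k
      have h3 := eLpNorm_smul_le_mul_eLpNorm (p := 2) (q := 2) (r := 1) (μ := (volume : Measure E))
        (hf.sub ((φ k).memLp 2)).aestronglyMeasurable (hKx x).aestronglyMeasurable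
      refine le_trans (le_of_eq ?_) h3
      rw [eLpNorm_one_eq_lintegral_enorm]
      congr with y
      rw [← mul_sub, enorm_mul, Pi.smul_apply', smul_eq_mul, enorm_mul, Pi.sub_apply, ← enorm_neg (φ k y - f y), neg_sub]
    refine tendsto_of_tendsto_of_tendsto_of_le_of_le tendsto_const_nhds ?_
      (fun _ => zero_le) hbound
    have := ENNReal.Tendsto.const_mul (a := eLpNorm (fun y => K (x - y)) 2 volume) hφ
      (Or.inr (hKx x).eLpNorm_ne_top)
    simpa using this
  have hnorm : ∀ k, ∫⁻ x, ‖(K ⋆[mul ℂ ℂ] φ k) x‖ₑ ^ 2 ≤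
      (eLpNorm f 2 volume + eLpNorm (f - ⇑(φ k)) 2 volume) ^ 2 := by
    intro k
    refine (conv_schwartz hK hb (φ k)).trans ?_
    rw [eLpNorm_two_sq]
    gcongr
    have h5 : (φ k : E → ℂ) = f - (f - ⇑(φ k)) := by simp
    conv_lhs => rw [h5]
    exact eLpNorm_sub_le hf.aestronglyMeasurable
      (hf.sub ((φ k).memLp 2)).aestronglyMeasurable (by norm_num)
  have hlim : Filter.Tendsto (fun k => (eLpNorm f 2 volume + eLpNorm (f - ⇑(φ k)) 2 volume) ^ 2)
      Filter.atTop (nhds (eLpNorm f 2 volume ^ 2)) := by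
    have := (ENNReal.continuous_pow 2).continuousAt.tendsto.comp
      (tendsto_const_nhds (x := eLpNorm f 2 volume).add hφ)
    simpa [Function.comp_def] using this
  rw [eLpNorm_two_sq f]
  calc ∫⁻ x, ‖∫ y, K (x - y) * f y‖ₑ ^ 2
      = ∫⁻ x, Filter.liminf (fun k => ‖(K ⋆[mul ℂ ℂ] φ k) x‖ₑ ^ 2) Filter.atTop := by
        congr with x
        have := ((ENNReal.continuous_pow 2).continuousAt.tendsto.comp
          ((continuous_enorm.tendsto _).comp (hpt x))).liminf_eq
        exact this.symm
    _ ≤ Filter.liminf (fun k => ∫⁻ x, ‖(K ⋆[mul ℂ ℂ] φ k) x‖ₑ ^ 2) Filter.atTop := by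
        apply lintegral_liminf_le'
        intro k
        have : AEStronglyMeasurable (K ⋆[mul ℂ ℂ] φ k) volume :=
          (hK.integrable_convolution _ (φ k).integrable).aestronglyMeasurable
        exact this.enorm.pow_const 2
    _ ≤ Filter.liminf (fun k => (eLpNorm f 2 volume + eLpNorm (f - ⇑(φ k)) 2 volume) ^ 2)
          Filter.atTop := Filter.liminf_le_liminf (Filter.Eventually.of_forall hnorm)
    _ = _ := hlim.liminf_eq

end PartA

section PartB
open MeasureTheory FourierTransform

variable {n : ℕ}

theorem gauss_int {a : ℝ} (ha : 0 < a) : Integrable (fun v : Rn n => Real.exp (-a * ‖v‖ ^ 2)) := by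
  have := (GaussianFourier.integrable_cexp_neg_mul_sq_norm_add (V := Rn n) (b := (a : ℂ))
    (by simpa using ha) 0 0).norm
  refine this.congr (Filter.Eventually.of_forall fun v => ?_)
  simp only [zero_mul, add_zero, Complex.norm_exp]
  congr 1
  norm_cast

theorem sq_exp_le {a : ℝ} (ha : 0 < a) (r : ℝ) :
    r ^ 2 * Real.exp (-a * r ^ 2) ≤ (2 / a) * Real.exp (-(a / 2) * r ^ 2) := by
  have h1 : (a / 2) * r ^ 2 ≤ Real.exp ((a / 2) * r ^ 2) := by
    linarith [Real.add_one_le_exp ((a / 2) * r ^ 2)]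
  have h2 : Real.exp (-(a / 2) * r ^ 2) = Real.exp ((a / 2) * r ^ 2) * Real.exp (-a * r ^ 2) := by
    rw [← Real.exp_add]; congr 1; ring
  rw [h2, ← mul_assoc]
  gcongr
  rw [div_mul_eq_mul_div, le_div_iff₀ ha]
  linarith

theorem sq_gauss_int {a : ℝ} (ha : 0 < a) :
    Integrable (fun v : Rn n => ‖v‖ ^ 2 * Real.exp (-a * ‖v‖ ^ 2)) := by
  refine ((gauss_int (n := n) (half_pos ha)).const_mul (2 / a)).mono (by fun_prop)
    (Filter.Eventually.of_forall fun v => ?_)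
  rw [Real.norm_of_nonneg (by positivity), Real.norm_of_nonneg (by positivity)]
  exact sq_exp_le ha _

theorem fourier_gauss_real {b : ℝ} (hb : 0 < b) (w : Rn n) :
    ∫ v : Rn n, 𝐞 (-inner ℝ v w) • ((Real.exp (-b * ‖v‖ ^ 2) : ℝ) : ℂ) =
      (((π / b) ^ ((n : ℝ) / 2) * Real.exp (-π ^ 2 * ‖w‖ ^ 2 / b) : ℝ) : ℂ) := by
  have h := fourier_gaussian_innerProductSpace (V := Rn n) (b := (b : ℂ)) (by simpa using hb) w
  rw [Real.fourier_eq] at h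
  push_cast
  rw [h, Complex.ofReal_cpow (by positivity)]
  simp

theorem fourier_sq_gauss {b : ℝ} (hb : 0 < b) (w : Rn n) :
    ∫ v : Rn n, 𝐞 (-inner ℝ v w) • ((‖v‖ ^ 2 * Real.exp (-b * ‖v‖ ^ 2) : ℝ) : ℂ) =
      (((π / b) ^ ((n : ℝ) / 2) * Real.exp (-π ^ 2 * ‖w‖ ^ 2 / b) *
        (n / (2 * b) - π ^ 2 * ‖w‖ ^ 2 / b ^ 2) : ℝ) : ℂ) := by
  have hs : Metric.ball b (b / 2) ∈ nhds b := Metric.ball_mem_nhds _ (by positivity)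
  have key := (hasDerivAt_integral_of_dominated_loc_of_deriv_le (𝕜 := ℝ) (μ := (volume : Measure (Rn n)))
    (F := fun (c : ℝ) (v : Rn n) => 𝐞 (-inner ℝ v w) • ((Real.exp (-c * ‖v‖ ^ 2) : ℝ) : ℂ))
    (F' := fun (c : ℝ) (v : Rn n) => 𝐞 (-inner ℝ v w) • ((Real.exp (-c * ‖v‖ ^ 2) * (-‖v‖ ^ 2) : ℝ) : ℂ))
    (x₀ := b) (bound := fun v => ‖v‖ ^ 2 * Real.exp (-(b / 2) * ‖v‖ ^ 2)) hs
    ?_ ?_ ?_ ?_ (sq_gauss_int (half_pos hb)) ?_).2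
  · have hg : HasDerivAt (fun c : ℝ => (((π / c) ^ ((n : ℝ) / 2) * Real.exp (-π ^ 2 * ‖w‖ ^ 2 / c) : ℝ) : ℂ))
        (((π / b) ^ ((n : ℝ) / 2) * Real.exp (-π ^ 2 * ‖w‖ ^ 2 / b) *
        (-n / (2 * b) + π ^ 2 * ‖w‖ ^ 2 / b ^ 2) : ℝ) : ℂ) b := by
      apply HasDerivAt.ofReal_comp
      have hi : ∀ k : ℝ, HasDerivAt (fun c : ℝ => k / c) (-k / b ^ 2) b := fun k =>
        ((hasDerivAt_const b k).fun_div (hasDerivAt_id b) hb.ne').congr_deriv (by simp)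
      have h1 := (hi π).rpow_const (p := (n : ℝ) / 2) (Or.inl (by positivity))
      have h2 := (hi (-π ^ 2 * ‖w‖ ^ 2)).exp
      refine (h1.fun_mul h2).congr_deriv ?_
      rw [Real.rpow_sub_one (by positivity)]
      field_simp
    have he : (fun c : ℝ => (((π / c) ^ ((n : ℝ) / 2) * Real.exp (-π ^ 2 * ‖w‖ ^ 2 / c) : ℝ) : ℂ))
        =ᶠ[nhds b] fun c => ∫ v : Rn n, 𝐞 (-inner ℝ v w) • ((Real.exp (-c * ‖v‖ ^ 2) : ℝ) : ℂ) := by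
      filter_upwards [lt_mem_nhds hb] with c hc
      exact (fourier_gauss_real hc w).symm
    have := key.unique (hg.congr_of_eventuallyEq he.symm)
    have e2 : (fun v : Rn n => 𝐞 (-inner ℝ v w) • ((‖v‖ ^ 2 * Real.exp (-b * ‖v‖ ^ 2) : ℝ) : ℂ)) =
      fun v => -(𝐞 (-inner ℝ v w) • ((Real.exp (-b * ‖v‖ ^ 2) * (-‖v‖ ^ 2) : ℝ) : ℂ)) := by
      funext v
      rw [← smul_neg]
      congr 1
      push_cast
      ring
    rw [e2, integral_neg, this, ← Complex.ofReal_neg]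
    congr 1
    ring
  · refine Filter.Eventually.of_forall fun c => Continuous.aestronglyMeasurable ?_
    exact (Real.continuous_fourierChar.comp (by fun_prop)).smul (by fun_prop)
  · rw [Real.fourierIntegral_convergent_iff]
    exact (gauss_int hb).ofReal
  · refine Continuous.aestronglyMeasurable ?_
    exact (Real.continuous_fourierChar.comp (by fun_prop)).smul (by fun_prop)
  · refine Filter.Eventually.of_forall fun v c hc => ?_
    have hc' : b / 2 < c := by
      rw [Metric.mem_ball, Real.dist_eq, abs_lt] at hc
      linarith [hc.1]
    rw [Circle.norm_smul, Complex.norm_real, norm_mul, norm_neg, Real.norm_of_nonneg (by positivity),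
      Real.norm_of_nonneg (by positivity), mul_comm]
    gcongr
  · refine Filter.Eventually.of_forall fun v c hc => ?_
    have h0 : HasDerivAt (fun c : ℝ => Real.exp (-c * ‖v‖ ^ 2))
        (Real.exp (-c * ‖v‖ ^ 2) * (-‖v‖ ^ 2)) c := by
      have := (((hasDerivAt_id c).neg).mul_const (‖v‖ ^ 2)).exp
      simpa using this
    have h1 := h0.ofReal_comp
    simp only [Circle.smul_def, smul_eq_mul]
    exact h1.const_mul _

theorem lap_eq {τ : ℝ} (v : Rn n) :
    heatKernelLap n τ v = (4 * π * τ) ^ (-(n : ℝ) / 2) * (1 / (4 * τ ^ 2)) *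
        (‖v‖ ^ 2 * Real.exp (-(1 / (4 * τ)) * ‖v‖ ^ 2)) -
      (4 * π * τ) ^ (-(n : ℝ) / 2) * (n / (2 * τ)) * Real.exp (-(1 / (4 * τ)) * ‖v‖ ^ 2) := by
  have : -‖v‖ ^ 2 / (4 * τ) = -(1 / (4 * τ)) * ‖v‖ ^ 2 := by ring
  rw [heatKernelLap, heatKernel, this]
  ring

theorem fourier_lap {τ : ℝ} (hτ : 0 < τ) (w : Rn n) :
    ∫ v : Rn n, 𝐞 (-inner ℝ v w) • ((heatKernelLap n τ v : ℝ) : ℂ) =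
      ((-(4 * π ^ 2 * ‖w‖ ^ 2) * Real.exp (-(4 * π ^ 2 * ‖w‖ ^ 2) * τ) : ℝ) : ℂ) := by
  have hb : 0 < 1 / (4 * τ) := by positivity
  have i1 : Integrable (fun v : Rn n => 𝐞 (-inner ℝ v w) •
      ((‖v‖ ^ 2 * Real.exp (-(1 / (4 * τ)) * ‖v‖ ^ 2) : ℝ) : ℂ)) := by
    rw [Real.fourierIntegral_convergent_iff]
    exact (sq_gauss_int hb).ofReal
  have i2 : Integrable (fun v : Rn n => 𝐞 (-inner ℝ v w) •
      ((Real.exp (-(1 / (4 * τ)) * ‖v‖ ^ 2) : ℝ) : ℂ)) := by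
    rw [Real.fourierIntegral_convergent_iff]
    exact (gauss_int hb).ofReal
  set A := (4 * π * τ) ^ (-(n : ℝ) / 2) with hA
  have e : (fun v : Rn n => 𝐞 (-inner ℝ v w) • ((heatKernelLap n τ v : ℝ) : ℂ)) = fun v =>
      ((A * (1 / (4 * τ ^ 2)) : ℝ) : ℂ) * (𝐞 (-inner ℝ v w) •
      ((‖v‖ ^ 2 * Real.exp (-(1 / (4 * τ)) * ‖v‖ ^ 2) : ℝ) : ℂ)) -
      ((A * (n / (2 * τ)) : ℝ) : ℂ) * (𝐞 (-inner ℝ v w) •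
      ((Real.exp (-(1 / (4 * τ)) * ‖v‖ ^ 2) : ℝ) : ℂ)) := by
    funext v
    rw [lap_eq]
    simp only [Circle.smul_def, smul_eq_mul]
    push_cast
    ring
  rw [e, integral_sub (i1.const_mul _) (i2.const_mul _), integral_const_mul, integral_const_mul,
    fourier_sq_gauss hb, fourier_gauss_real hb, ← Complex.ofReal_mul, ← Complex.ofReal_mul,
    ← Complex.ofReal_sub]
  congr 1
  have hA' : A * (π / (1 / (4 * τ))) ^ ((n : ℝ) / 2) = 1 := by
    have : π / (1 / (4 * τ)) = 4 * π * τ := by field_simp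
    rw [this, hA, ← Real.rpow_add (by positivity)]
    have : -(n : ℝ) / 2 + n / 2 = 0 := by ring
    rw [this, Real.rpow_zero]
  have hexp : -π ^ 2 * ‖w‖ ^ 2 / (1 / (4 * τ)) = -(4 * π ^ 2 * ‖w‖ ^ 2) * τ := by field_simp
  rw [hexp]
  calc _ = (A * (π / (1 / (4 * τ))) ^ ((n : ℝ) / 2)) * Real.exp (-(4 * π ^ 2 * ‖w‖ ^ 2) * τ) *
        ((1 / (4 * τ ^ 2)) * (n / (2 * (1 / (4 * τ))) - π ^ 2 * ‖w‖ ^ 2 / (1 / (4 * τ)) ^ 2)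
          - n / (2 * τ)) := by ring
    _ = _ := by
      rw [hA']
      field_simp
      ring

end PartB

section PartC
open MeasureTheory FourierTransform

variable {n : ℕ}

theorem lap_bound (n : ℕ) {ε R : ℝ} (hε : 0 < ε) (hR : 0 < R) : ∃ A c : ℝ, 0 ≤ A ∧ 0 < c ∧
    ∀ τ ∈ Set.Icc ε R, ∀ v : Rn n, ‖heatKernelLap n τ v‖ ≤ A * Real.exp (-c * ‖v‖ ^ 2) := by
  set B := (4 * π * ε) ^ (-(n : ℝ) / 2) with hB
  have hB0 : 0 ≤ B := by positivity
  set a := 1 / (4 * R) with ha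
  have ha0 : 0 < a := by positivity
  refine ⟨B * (1 / (4 * ε ^ 2)) * (2 / a) + B * (n / (2 * ε)), a / 2, by positivity, by positivity, ?_⟩
  rintro τ ⟨h1, h2⟩ v
  have hτ : 0 < τ := hε.trans_le h1
  have e1 : (4 * π * τ) ^ (-(n : ℝ) / 2) ≤ B := by
    apply Real.rpow_le_rpow_of_nonpos (by positivity) (by gcongr)
    have : (0 : ℝ) ≤ n := by positivity
    linarith
  have e2 : Real.exp (-(1 / (4 * τ)) * ‖v‖ ^ 2) ≤ Real.exp (-a * ‖v‖ ^ 2) := by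
    gcongr
    rw [ha]
    gcongr
  have e3 : Real.exp (-a * ‖v‖ ^ 2) ≤ Real.exp (-(a / 2) * ‖v‖ ^ 2) := by
    gcongr; linarith
  have e4 := sq_exp_le ha0 ‖v‖
  rw [lap_eq]
  refine (norm_sub_le _ _).trans ?_
  rw [Real.norm_of_nonneg (by positivity), Real.norm_of_nonneg (by positivity), add_mul]
  gcongr ?_ + ?_
  · calc _ ≤ B * (1 / (4 * ε ^ 2)) * (‖v‖ ^ 2 * Real.exp (-a * ‖v‖ ^ 2)) := by gcongr
      _ ≤ B * (1 / (4 * ε ^ 2)) * ((2 / a) * Real.exp (-(a / 2) * ‖v‖ ^ 2)) := by gcongr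
      _ = _ := by ring
  · calc _ ≤ B * (n / (2 * ε)) * Real.exp (-a * ‖v‖ ^ 2) := by gcongr
      _ ≤ _ := by gcongr

/-- truncated kernel -/
def kern (n : ℕ) (ε R : ℝ) (p : ℝ × Rn n) : ℂ :=
  (Set.Icc ε R).indicator (fun τ => ((heatKernelLap n τ p.2 : ℝ) : ℂ)) p.1

theorem lap_meas (n : ℕ) : Measurable (fun p : ℝ × Rn n => heatKernelLap n p.1 p.2) := by
  unfold heatKernelLap heatKernel
  fun_prop

theorem kern_meas (n : ℕ) (ε R : ℝ) : Measurable (kern n ε R) := by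
  have : kern n ε R = (Prod.fst ⁻¹' Set.Icc ε R).indicator
      (fun p : ℝ × Rn n => ((heatKernelLap n p.1 p.2 : ℝ) : ℂ)) := by
    funext p
    simp [kern, Set.indicator]
  rw [this]
  exact (Complex.measurable_ofReal.comp (lap_meas n)).indicator (measurable_fst measurableSet_Icc)

theorem kern_bound (n : ℕ) {ε R : ℝ} (hε : 0 < ε) (hR : 0 < R) : ∃ A c : ℝ, 0 ≤ A ∧ 0 < c ∧
    ∀ p : ℝ × Rn n, ‖kern n ε R p‖ ≤
      A * ((Set.Icc ε R).indicator (fun _ => (1 : ℝ)) p.1 * Real.exp (-c * ‖p.2‖ ^ 2)) := by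
  obtain ⟨A, c, hA, hc, h⟩ := lap_bound n hε hR
  refine ⟨A, c, hA, hc, fun p => ?_⟩
  by_cases hp : p.1 ∈ Set.Icc ε R
  · simp only [kern, Set.indicator_of_mem hp, one_mul, Complex.norm_real]
    exact h _ hp _
  · simp [kern, Set.indicator_of_notMem hp]

theorem kern_int (n : ℕ) {ε R : ℝ} (hε : 0 < ε) (hR : 0 < R) : Integrable (kern n ε R) := by
  obtain ⟨A, c, hA, hc, h⟩ := kern_bound n hε hR
  have h1 : Integrable ((Set.Icc ε R).indicator (fun _ => (1 : ℝ))) :=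
    (integrable_indicator_iff measurableSet_Icc).2 (integrableOn_const (by simp))
  have h2 := (h1.mul_prod (gauss_int (n := n) hc)).const_mul A
  exact h2.mono' (kern_meas n ε R).aestronglyMeasurable (Filter.Eventually.of_forall h)

theorem kern_memLp (n : ℕ) {ε R : ℝ} (hε : 0 < ε) (hR : 0 < R) : MemLp (kern n ε R) 2 := by
  obtain ⟨A, c, hA, hc, h⟩ := kern_bound n hε hR
  have hA' : ∀ p, ‖kern n ε R p‖ ≤ A := fun p => by
    refine (h p).trans (mul_le_of_le_one_right hA ?_)
    apply mul_le_one₀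
    · by_cases hp : p.1 ∈ Set.Icc ε R <;> simp [hp]
    · positivity
    · rw [Real.exp_le_one_iff]
      have : 0 ≤ c * ‖p.2‖ ^ 2 := by positivity
      linarith
  rw [memLp_two_iff_integrable_sq_norm (kern_meas n ε R).aestronglyMeasurable]
  refine ((kern_int n hε hR).norm.mul_const A).mono'
    ((kern_meas n ε R).norm.pow_const 2).aestronglyMeasurable (Filter.Eventually.of_forall fun p => ?_)
  rw [Real.norm_of_nonneg (by positivity), sq]
  have := hA' p
  gcongr

theorem int_exp_le {l ε R : ℝ} (hl : 0 ≤ l) (hε : 0 < ε) (hR : ε ≤ R) :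
    ∫ τ in Set.Icc ε R, l * Real.exp (-l * τ) ≤ 1 := by
  rw [integral_Icc_eq_integral_Ioc, ← intervalIntegral.integral_of_le hR,
    intervalIntegral.integral_eq_sub_of_hasDerivAt (f := fun τ => -Real.exp (-l * τ))]
  · have h1 : Real.exp (-l * ε) ≤ 1 := by
      rw [Real.exp_le_one_iff]; nlinarith
    have h2 := Real.exp_pos (-l * R)
    linarith
  · intro τ _
    have := (((hasDerivAt_id τ).const_mul (-l)).exp).neg
    refine this.congr_deriv ?_
    simp
    ring
  · exact Continuous.intervalIntegrable (by fun_prop) _ _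

theorem kern_fourier (n : ℕ) {ε R : ℝ} (hε : 0 < ε) (hR : ε ≤ R) (σ : ℝ) (w : Rn n) :
    ‖∫ p : ℝ × Rn n, 𝐞 (-(inner ℝ p.1 σ + inner ℝ p.2 w)) • kern n ε R p‖ ≤ 1 := by
  have hi := kern_int n hε (hε.trans_le hR)
  have hi' : Integrable (fun p : ℝ × Rn n =>
      𝐞 (-(inner ℝ p.1 σ + inner ℝ p.2 w)) • kern n ε R p) := by
    refine hi.mono ?_ (Filter.Eventually.of_forall fun p => by simp [Circle.norm_smul])
    exact (Real.continuous_fourierChar.comp (by fun_prop)).aestronglyMeasurable.smul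
      hi.aestronglyMeasurable
  rw [Measure.volume_eq_prod, integral_prod _ hi']
  set l := 4 * π ^ 2 * ‖w‖ ^ 2 with hl
  have hin : ∀ τ : ℝ, ∫ y : Rn n, 𝐞 (-(inner ℝ τ σ + inner ℝ y w)) • kern n ε R (τ, y) =
      (Set.Icc ε R).indicator (fun τ => 𝐞 (-inner ℝ τ σ) •
        ((-l * Real.exp (-l * τ) : ℝ) : ℂ)) τ := by
    intro τ
    by_cases hτ : τ ∈ Set.Icc ε R
    · rw [Set.indicator_of_mem hτ, ← fourier_lap (hε.trans_le hτ.1) w]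
      simp only [Circle.smul_def]
      rw [← integral_smul]
      congr with y
      simp only [kern, Set.indicator_of_mem hτ]
      rw [neg_add, AddChar.map_add_eq_mul]
      simp [mul_assoc]
    · simp [kern, hτ]
  simp_rw [hin]
  rw [integral_indicator measurableSet_Icc]
  refine le_trans (norm_integral_le_of_norm_le (g := fun τ => l * Real.exp (-l * τ)) ?_ ?_)
    (int_exp_le (by positivity) hε hR)
  · exact (Continuous.continuousOn (by fun_prop)).integrableOn_compact isCompact_Icc
  · refine Filter.Eventually.of_forall fun τ => ?_
    rw [Circle.norm_smul, Complex.norm_real, norm_mul, norm_neg, Real.norm_of_nonneg (by positivity),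
      Real.norm_of_nonneg (by positivity)]

theorem kern_conv (n : ℕ) {ε R : ℝ} (hε : 0 < ε) (hR : ε ≤ R) {f : ℝ × Rn n → ℂ}
    (hf : MemLp f 2) :
    ∫⁻ p, ‖∫ q, kern n ε R (p - q) * f q‖ₑ ^ 2 ≤ ∫⁻ p, ‖f p‖ₑ ^ 2 := by
  have hR0 := hε.trans_le hR
  have mp := WithLp.volume_preserving_ofLp ℝ (Rn n)
  have me : MeasurableEmbedding (@WithLp.ofLp 2 (ℝ × Rn n)) :=
    (MeasurableEquiv.toLp 2 (ℝ × Rn n)).symm.measurableEmbedding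
  have h := conv_L2 (E := WithLp 2 (ℝ × Rn n)) (K := fun p => kern n ε R p.ofLp)
    (f := fun p => f p.ofLp)
    ((mp.integrable_comp_emb me).2 (kern_int n hε hR0))
    ((kern_memLp n hε hR0).comp_measurePreserving mp) ?_ (hf.comp_measurePreserving mp)
  · rw [mp.lintegral_comp_emb me (fun p => ‖f p‖ₑ ^ 2)] at h
    refine le_trans (le_of_eq ?_) h
    rw [← mp.lintegral_comp_emb me]
    congr with p
    rw [← mp.integral_comp me]
    rfl
  · intro ξ
    rw [Real.fourier_eq]
    have := kern_fourier n hε hR ξ.fst ξ.snd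
    rw [← mp.integral_comp me] at this
    simpa [WithLp.prod_inner_apply] using this

end PartC

section PartD
open MeasureTheory Filter

/-- extension by zero -/
def extZ {n : ℕ} (F : ℝ → Rn n → ℂ) (p : ℝ × Rn n) : ℂ :=
  (Set.Ioi (0 : ℝ)).indicator (fun s => F s p.2) p.1

theorem extZ_meas {n : ℕ} {F : ℝ → Rn n → ℂ} (hF : Measurable (Function.uncurry F)) :
    Measurable (extZ F) := by
  have : extZ F = (Prod.fst ⁻¹' Set.Ioi (0 : ℝ)).indicator (Function.uncurry F) := by
    funext p
    simp [extZ, Set.indicator, Function.uncurry]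
  rw [this]
  exact hF.indicator (measurable_fst measurableSet_Ioi)

theorem extZ_norm {n : ℕ} {F : ℝ → Rn n → ℂ} (hF : Measurable (Function.uncurry F)) :
    ∫⁻ p, ‖extZ F p‖ₑ ^ 2 = ∫⁻ t in Set.Ioi (0 : ℝ), ∫⁻ x : Rn n, (‖F t x‖₊ : ℝ≥0∞) ^ 2 := by
  rw [Measure.volume_eq_prod, lintegral_prod _ ((extZ_meas hF).enorm.pow_const 2).aemeasurable,
    ← lintegral_indicator measurableSet_Ioi]
  congr with t
  by_cases ht : t ∈ Set.Ioi (0 : ℝ)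
  · simp only [extZ, Set.indicator_of_mem ht]
    rfl
  · simp [extZ, Set.indicator_of_notMem ht]

theorem maxReg_tendsto {n : ℕ} {F : ℝ → Rn n → ℂ} (hf : MemLp (extZ F) 2)
    (t : ℝ) (x : Rn n)
    (hI : IntegrableOn (fun s => ∫ y : Rn n, heatKernelLap n (t - s) (x - y) • F s y)
      (Set.Ioo 0 t)) :
    Tendsto (fun k : ℕ => ∫ q, kern n (1 / ((k : ℝ) + 1)) ((k : ℝ) + 1) ((t, x) - q) * extZ F q)
      atTop (nhds (maxReg n F t x)) := by
  set J : ℝ → ℂ := fun s => ∫ y : Rn n, heatKernelLap n (t - s) (x - y) • F s y with hJ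
  have hG : ∀ k : ℕ, ∫ q, kern n (1 / ((k : ℝ) + 1)) ((k : ℝ) + 1) ((t, x) - q) * extZ F q =
      ∫ s in Set.Ioo (0 : ℝ) t,
        (Set.Icc (t - ((k : ℝ) + 1)) (t - 1 / ((k : ℝ) + 1))).indicator J s := by
    intro k
    have hk : (0 : ℝ) < 1 / ((k : ℝ) + 1) := by positivity
    have hint : Integrable (fun q =>
        kern n (1 / ((k : ℝ) + 1)) ((k : ℝ) + 1) ((t, x) - q) * extZ F q) :=
      ((kern_memLp n hk (by positivity)).comp_measurePreserving
        ((Measure.measurePreserving_sub_left (volume : Measure ℝ) t).prod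
          (Measure.measurePreserving_sub_left (volume : Measure (Rn n)) x))).integrable_mul hf
    rw [Measure.volume_eq_prod, integral_prod _ hint, ← integral_indicator measurableSet_Ioo]
    congr with s
    have hiff : s ∈ Set.Icc (t - ((k : ℝ) + 1)) (t - 1 / ((k : ℝ) + 1)) ↔
        t - s ∈ Set.Icc (1 / ((k : ℝ) + 1)) ((k : ℝ) + 1) := by
      simp only [Set.mem_Icc]
      constructor <;> rintro ⟨h1, h2⟩ <;> constructor <;> linarith
    by_cases hs : 0 < s
    · by_cases h2 : s ∈ Set.Icc (t - ((k : ℝ) + 1)) (t - 1 / ((k : ℝ) + 1))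
      · have h3 : s ∈ Set.Ioo 0 t := ⟨hs, by linarith [h2.2]⟩
        rw [Set.indicator_of_mem h3, Set.indicator_of_mem h2, hJ]
        dsimp only
        congr with y
        simp only [kern, extZ, Prod.fst_sub, Prod.snd_sub, Prod.mk_sub_mk]
        rw [Set.indicator_of_mem (hiff.1 h2), Set.indicator_of_mem (by exact hs)]
        simp
      · have h4 : (∫ y : Rn n, kern n (1 / ((k : ℝ) + 1)) ((k : ℝ) + 1) ((t, x) - (s, y)) *
            extZ F (s, y)) = 0 := by
          rw [hiff] at h2
          simp only [kern, Prod.mk_sub_mk, Set.indicator_of_notMem h2]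
          simp
        rw [h4]
        simp only [Set.indicator, h2, if_false, ite_self]
    · have h3 : s ∉ Set.Ioo 0 t := fun h => hs h.1
      have h4 : s ∉ Set.Ioi (0 : ℝ) := hs
      rw [Set.indicator_of_notMem h3]
      simp only [extZ, Set.indicator_of_notMem h4]
      simp
  simp_rw [hG]
  unfold maxReg
  refine tendsto_integral_of_dominated_convergence (fun s => ‖J s‖) ?_ hI.norm ?_ ?_
  · intro k
    exact hI.aestronglyMeasurable.indicator measurableSet_Icc
  · intro k
    exact Eventually.of_forall fun s => norm_indicator_le_norm_self _ _
  · refine (ae_restrict_iff' measurableSet_Ioo).2 (Eventually.of_forall fun s hs => ?_)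
    refine tendsto_const_nhds.congr' ?_
    have h1 : ∀ᶠ k : ℕ in atTop, 1 / ((k : ℝ) + 1) < t - s :=
      tendsto_one_div_add_atTop_nhds_zero_nat.eventually (gt_mem_nhds (by linarith [hs.2]))
    have h2 : ∀ᶠ k : ℕ in atTop, t - s < (k : ℝ) :=
      tendsto_natCast_atTop_atTop.eventually (eventually_gt_atTop (t - s))
    filter_upwards [h1, h2] with k hk1 hk2
    rw [Set.indicator_of_mem]
    constructor <;> linarith

theorem maxReg_le_liminf {n : ℕ} {F : ℝ → Rn n → ℂ} (hf : MemLp (extZ F) 2)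
    (t : ℝ) (x : Rn n) :
    (‖maxReg n F t x‖₊ : ℝ≥0∞) ^ 2 ≤ liminf (fun k : ℕ =>
      ‖∫ q, kern n (1 / ((k : ℝ) + 1)) ((k : ℝ) + 1) ((t, x) - q) * extZ F q‖ₑ ^ 2) atTop := by
  by_cases hI : IntegrableOn (fun s => ∫ y : Rn n, heatKernelLap n (t - s) (x - y) • F s y)
      (Set.Ioo 0 t)
  · have := ((ENNReal.continuous_pow 2).continuousAt.tendsto.comp
          ((continuous_enorm.tendsto _).comp (maxReg_tendsto hf t x hI))).liminf_eq
    exact this.symm.le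
  · have : maxReg n F t x = 0 := integral_undef hI
    simp [this]

theorem maxReg_main {n : ℕ} {F : ℝ → Rn n → ℂ} (hF : Measurable (Function.uncurry F))
    (hfin : ∫⁻ t in Set.Ioi (0 : ℝ), ∫⁻ x : Rn n, (‖F t x‖₊ : ℝ≥0∞) ^ 2 ≠ ∞) :
    ∫⁻ t in Set.Ioi (0 : ℝ), ∫⁻ x : Rn n, (‖maxReg n F t x‖₊ : ℝ≥0∞) ^ 2 ≤
      ∫⁻ t in Set.Ioi (0 : ℝ), ∫⁻ x : Rn n, (‖F t x‖₊ : ℝ≥0∞) ^ 2 := by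
  have hf : MemLp (extZ F) 2 := by
    refine ⟨(extZ_meas hF).aestronglyMeasurable, ?_⟩
    rw [← extZ_norm hF, eLpNorm_two_sq] at hfin
    rw [lt_top_iff_ne_top]
    intro h
    simp [h] at hfin
  set G : ℕ → ℝ × Rn n → ℂ := fun k p =>
    ∫ q, kern n (1 / ((k : ℝ) + 1)) ((k : ℝ) + 1) (p - q) * extZ F q with hG
  have hGm : ∀ k, Measurable fun p => ‖G k p‖ₑ ^ 2 := by
    intro k
    have h1 : StronglyMeasurable (Function.uncurry fun (p q : ℝ × Rn n) =>
        kern n (1 / ((k : ℝ) + 1)) ((k : ℝ) + 1) (p - q) * extZ F q) := by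
      apply Measurable.stronglyMeasurable
      exact ((kern_meas n _ _).comp (measurable_fst.sub measurable_snd)).mul
        ((extZ_meas hF).comp measurable_snd)
    exact (h1.integral_prod_right (ν := volume)).measurable.enorm.pow_const 2
  calc ∫⁻ t in Set.Ioi (0 : ℝ), ∫⁻ x : Rn n, (‖maxReg n F t x‖₊ : ℝ≥0∞) ^ 2
      ≤ ∫⁻ t : ℝ, ∫⁻ x : Rn n, (‖maxReg n F t x‖₊ : ℝ≥0∞) ^ 2 := setLIntegral_le_lintegral _ _
    _ ≤ ∫⁻ t : ℝ, ∫⁻ x : Rn n, liminf (fun k => ‖G k (t, x)‖ₑ ^ 2) atTop :=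
        lintegral_mono fun t => lintegral_mono fun x => maxReg_le_liminf hf t x
    _ = ∫⁻ p : ℝ × Rn n, liminf (fun k => ‖G k p‖ₑ ^ 2) atTop := by
        rw [Measure.volume_eq_prod, lintegral_prod _ (Measurable.liminf hGm).aemeasurable]
    _ ≤ liminf (fun k => ∫⁻ p : ℝ × Rn n, ‖G k p‖ₑ ^ 2) atTop := lintegral_liminf_le hGm
    _ ≤ liminf (fun _ : ℕ => ∫⁻ p, ‖extZ F p‖ₑ ^ 2) atTop := by
        refine liminf_le_liminf (Eventually.of_forall fun k => ?_)
        refine kern_conv n (by positivity) ?_ hf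
        have h0 : (0 : ℝ) ≤ k := Nat.cast_nonneg k
        rw [div_le_iff₀ (by positivity)]
        nlinarith
    _ = _ := by rw [liminf_const, extZ_norm hF]

end PartD

/-- De Simon's theorem: the maximal regularity operator
`(M⁺F)(t,·) = ∫₀^t (Δh_{t-s}) ⋆ F(s,·) ds` is bounded on `L²(ℝ^{n+1}_+)`. -/
theorem maxReg_L2_estimate (n : ℕ) (hn : 1 ≤ n) :
    ∃ C > (0 : ℝ), ∀ F : ℝ → Rn n → ℂ,
      Measurable (Function.uncurry F) →
      l2HalfNorm F ≠ ∞ →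
      l2HalfNorm (maxReg n F) ≤ ENNReal.ofReal C * l2HalfNorm F := by
  refine ⟨1, one_pos, fun F hF hfin => ?_⟩
  rw [ENNReal.ofReal_one, one_mul]
  unfold l2HalfNorm at hfin ⊢
  refine ENNReal.rpow_le_rpow (maxReg_main hF fun h => hfin ?_) (by norm_num)
  rw [h]
  simp
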